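/- Let h ≥ 2 and k ≥ 5 be integers, and let A = {0 = a_0 < a_1 < ... < a_{k-1}} be a set of k integers in normal form. If |hA| < hk + 3h - 4, then A ⊆ [0, k+2], i.e., a_{k-1} ≤ k+2. -/

import Mathlib

open Finset Pointwise

/-- The `h`-fold sumset: all sums of `h` elements of `A` (with repetition). -/
def hfold : ℕ → Finset ℤ → Finset ℤ
  | 0, _ => {0}
  | n + 1, A => A + hfold n A

/-!
Let `l` be the largest element of `A`, suppose `l ≥ k + 3`, and let `B` be the image of `A` in
`ℤ/l`. Passing from `nA` to `(n+1)A` gains at least `|(n+1)B|` elements, because `nA` and its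
translate by `l` lie in `(n+1)A` and the smallest representative of each residue class is not in
the translate. Adding `B` to a set gains two elements until all of `ℤ/l` is reached, so
`|(n+1)B| ≥ k + 3` for `n ≥ 2`, and it remains to see that `|2A| ≥ 2k + 2`. For `k ≥ 6` this
follows from Freiman's `3/2` theorem applied to `B`. For `k = 5` it reads `|2A| ≥ 3k - 3`, which is
proved along `k = 3, 4, 5` by removing the largest element: this loses three sums unless `A` ends
in three consecutive integers, and by reflection also starts with three, so that `A` is an interval
or has six elements.
-/

section Group

variable {G : Type*}

theorem card_le_card_mul_self_of_closure_eq_top [Group G] [Fintype G] [DecidableEq G]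
    {B : Finset G} (h1 : 1 ∈ B) (hgen : Subgroup.closure (B : Set G) = ⊤)
    (hB : 2 * #(B * B) < 3 * #B) : Fintype.card G ≤ #(B * B) := by
  have hB' : (#(B * B) : ℚ) < (3 / 2 : ℚ) * #B := by
    have : (2 * #(B * B) : ℚ) < 3 * #B := mod_cast hB
    linarith
  have htop : invMulSubgroup B hB' = ⊤ := by
    rw [eq_top_iff, ← hgen, Subgroup.closure_le, invMulSubgroup_eq_inv_mul]
    exact fun b hb => Set.mem_mul.2 ⟨1, by simpa using h1, b, hb, one_mul b⟩
  have huniv : B⁻¹ * B = univ := by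
    rw [← coe_inj, coe_mul, ← invMulSubgroup_eq_inv_mul B hB', htop, coe_univ,
      Subgroup.coe_top]
  rw [← card_inv_mul_of_doubling_lt_three_halves hB', huniv, card_univ]

theorem card_le_card_add_self_of_closure_eq_top [AddGroup G] [Fintype G] [DecidableEq G]
    {B : Finset G} (h0 : 0 ∈ B) (hgen : AddSubgroup.closure (B : Set G) = ⊤)
    (hB : 2 * #(B + B) < 3 * #B) : Fintype.card G ≤ #(B + B) := by
  have hgen' : Subgroup.closure (Multiplicative.toAdd ⁻¹' (B : Set G)) = ⊤ := by
    rw [← AddSubgroup.toSubgroup_closure, hgen, map_top]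
  rw [← Fintype.card_multiplicative]
  exact card_le_card_mul_self_of_closure_eq_top (G := Multiplicative G) (B := B) h0 hgen' hB

/-- Otherwise `S` is stable under adding `b`, so `x + b` lies in `S = S + {b}` and `x` in `S`. -/
theorem sub_mem_of_add_eq_insert [AddCommGroup G] [DecidableEq G] {S B : Finset G} {x b : G}
    (h : S + B = insert x S) (hx : x ∉ S) (hb : b ∈ B) (hb0 : b ≠ 0) : x - b ∈ S := by
  by_contra hxb
  have hSb : S + {b} = S := by
    refine eq_of_subset_of_card_le (fun y hy => ?_) (card_add_singleton S b).ge
    have hyx : y ≠ x := by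
      rintro rfl
      obtain ⟨s, hs, b', hb', rfl⟩ := mem_add.1 hy
      rw [mem_singleton.1 hb', add_sub_cancel_right] at hxb
      exact hxb hs
    have hyS : y ∈ insert x S := h ▸ add_subset_add_left (singleton_subset_iff.2 hb) hy
    exact mem_of_mem_insert_of_ne hyS hyx
  have hxb' : x + b ∈ S := by
    have hstab : insert x S + {b} = insert x S := by rw [← h, add_right_comm, hSb]
    have hmem : x + b ∈ insert x S :=
      hstab ▸ add_mem_add (mem_insert_self x S) (mem_singleton_self b)
    exact mem_of_mem_insert_of_ne hmem (by simpa using hb0)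
  rw [← hSb] at hxb'
  obtain ⟨s, hs, b', hb', hsx⟩ := mem_add.1 hxb'
  rw [mem_singleton.1 hb'] at hsx
  exact hx (add_right_cancel hsx ▸ hs)

theorem add_add_eq_of_card_add_le [AddCommGroup G] [DecidableEq G] {S B : Finset G}
    (h0 : 0 ∈ B) (hB : 3 ≤ #B) (hS : #(S + B) ≤ #S + 1) : S + B + B = S + B := by
  have hSB : S ⊆ S + B := subset_add_left S h0
  rcases hSB.eq_or_ssubset with heq | hssub
  · rw [← heq, ← heq]
  obtain ⟨x, hxSB, hxS⟩ := exists_of_ssubset hssub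
  have hins : S + B = insert x S := .symm <|
    eq_of_subset_of_card_le (insert_subset hxSB hSB) (by rwa [card_insert_of_notMem hxS])
  refine (subset_add_left _ h0).antisymm' (add_subset_iff.2 fun t ht b hb => ?_)
  rw [hins, mem_insert] at ht
  rcases ht with rfl | ht
  swap
  · exact add_mem_add ht hb
  obtain ⟨c, hcB, hc⟩ : ∃ c ∈ B, c ∉ ({0, b} : Finset G) :=
    exists_mem_notMem_of_card_lt_card (card_le_two.trans_lt hB)
  obtain ⟨hc0, hcb⟩ : c ≠ 0 ∧ c ≠ b := by simpa using hc
  have hmem : t - c + b ∈ insert t S :=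
    hins ▸ add_mem_add (sub_mem_of_add_eq_insert hins hxS hcB hc0) hb
  have hne : t - c + b ≠ t := fun h => hcb (by simpa [sub_add, sub_eq_zero] using h)
  have hsum : t + b = t - c + b + c := by abel
  exact hsum ▸ add_mem_add (mem_of_mem_insert_of_ne hmem hne) hcB

theorem eq_univ_of_add_eq_self [AddCommGroup G] [Fintype G] [DecidableEq G] {T B : Finset G}
    (hgen : AddSubgroup.closure (B : Set G) = ⊤) (hT : T.Nonempty) (h : T + B = T) :
    T = univ := by
  have hstab : AddAction.stabilizer G T = ⊤ := by
    rw [eq_top_iff, ← hgen, AddSubgroup.closure_le]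
    refine fun b hb => AddAction.mem_stabilizer_finset'.2 fun t ht => ?_
    rw [vadd_eq_add, add_comm, ← h]
    exact add_mem_add ht hb
  obtain ⟨t, ht⟩ := hT
  refine eq_univ_of_forall fun x => ?_
  have hx : x - t ∈ AddAction.stabilizer G T := hstab ▸ AddSubgroup.mem_top _
  simpa using AddAction.mem_stabilizer_finset'.1 hx ht

theorem min_card_add_two_le_card_add [AddCommGroup G] [Fintype G] [DecidableEq G]
    {S B : Finset G} (h0 : 0 ∈ B) (hgen : AddSubgroup.closure (B : Set G) = ⊤) (hB : 3 ≤ #B)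
    (hS : S.Nonempty) : min (Fintype.card G) (#S + 2) ≤ #(S + B) := by
  rcases le_or_gt (#S + 2) #(S + B) with hle | hlt
  · exact min_le_of_right_le hle
  · have huniv : S + B = univ := eq_univ_of_add_eq_self hgen (hS.add ⟨0, h0⟩)
      (add_add_eq_of_card_add_le h0 hB (by lia))
    exact min_le_of_left_le (by rw [huniv, card_univ])

theorem card_singleton_sub [AddGroup G] [DecidableEq G] (A : Finset G) (g : G) :
    #({g} - A) = #A := by
  rw [singleton_sub, card_image_of_injective _ sub_right_injective]

theorem card_singleton_sub_add_singleton_sub [AddCommGroup G] [DecidableEq G] (A : Finset G)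
    (g : G) : #({g} - A + ({g} - A)) = #(A + A) := by
  rw [sub_add_sub_comm, singleton_add_singleton, card_singleton_sub]

end Group

/-- Each fibre of `f` that meets `Y` has a least element in `Y`, which is not of the form
`x + c` with `x ∈ X`. -/
theorem card_add_card_image_le {G R : Type*} [AddGroup G] [LinearOrder G] [AddLeftStrictMono G]
    [DecidableEq R] {c : G} (hc : 0 < c) {f : G → R} (hf : ∀ x, f (x + c) = f x)
    {X Y : Finset G} (hXY : X ⊆ Y) (hXc : X + {c} ⊆ Y) : #X + #(Y.image f) ≤ #Y := by
  have himg : Y.image f ⊆ (Y \ (X + {c})).image f := by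
    intro r hr
    obtain ⟨y, hy, hmin⟩ := exists_min_image {y ∈ Y | f y = r} id
      (filter_nonempty_iff.2 (mem_image.1 hr))
    simp only [mem_filter, id, and_imp] at hy hmin
    refine mem_image.2 ⟨y, mem_sdiff.2 ⟨hy.1, fun hyX => ?_⟩, hy.2⟩
    obtain ⟨x, hx, c', hc', rfl⟩ := mem_add.1 hyX
    obtain rfl := mem_singleton.1 hc'
    exact (hmin x (hXY hx) (hf x ▸ hy.2)).not_gt (lt_add_of_pos_right x hc)
  calc #X + #(Y.image f) ≤ #(X + {c}) + #(Y \ (X + {c})) := by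
        rw [card_add_singleton]
        gcongr
        exact (card_le_card himg).trans card_image_le
    _ = #Y := by rw [add_comm, card_sdiff_add_card_eq_card hXc]

section OrderedGroup

variable {G : Type*} [AddCommGroup G] [LinearOrder G] [IsOrderedAddMonoid G] {A : Finset G}
  {l m : G}

theorem three_mul_card_le_of_add_notMem (hl : l ∈ A)
    (hnew : ∀ a ∈ A, l + a ∉ A.erase l + A.erase l) : 3 * #A ≤ #(A + A) + 3 := by
  have hdisj : Disjoint (A.erase l + A.erase l) ({l} + A) := by
    rw [disjoint_comm, disjoint_left, singleton_add]
    exact forall_mem_image.2 hnew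
  have hsub : A.erase l + A.erase l ∪ ({l} + A) ⊆ A + A :=
    union_subset (add_subset_add (erase_subset _ _) (erase_subset _ _))
      (add_subset_add_right (singleton_subset_iff.2 hl))
  have hsum : #(A.erase l + A.erase l) + #A ≤ #(A + A) := by
    rw [← card_singleton_add l A, ← card_union_of_disjoint hdisj]
    exact card_le_card hsub
  have hcard := card_erase_add_one hl
  rcases (A.erase l).eq_empty_or_nonempty with hempty | hne
  · rw [hempty, card_empty] at hcard
    lia
  · have hdouble := cauchy_davenport_add_of_linearOrder_isCancelAdd hne hne
    lia

theorem three_mul_card_le_of_add_self_lt (hl : l ∈ A) (hm : IsGreatest (A.erase l : Set G) m)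
    (hml : m + m < l) (h0 : ∀ a ∈ A, 0 ≤ a) : 3 * #A ≤ #(A + A) + 3 := by
  refine three_mul_card_le_of_add_notMem hl fun a ha hla => ?_
  obtain ⟨p, hp, q, hq, hpq⟩ := mem_add.1 hla
  have : p + q < l + a := calc
    p + q ≤ m + m := add_le_add (hm.2 hp) (hm.2 hq)
    _ < l := hml
    _ ≤ l + a := le_add_of_nonneg_right (h0 a ha)
  exact this.ne hpq

/-- Both `l + l` and `l + m` are new sums, so there is no room for a third one. -/
theorem add_mem_of_card_add_self_lt (hl : IsGreatest (A : Set G) l)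
    (hm : IsGreatest (A.erase l : Set G) m)
    (hcard : #(A + A) < #(A.erase l + A.erase l) + 3) {a : G} (ha : a ∈ A) (ham : a < m) :
    l + a ∈ A.erase l + A.erase l := by
  by_contra hnew
  have hmA : m ∈ A := mem_of_mem_erase hm.1
  have hml : m < l := (hl.2 hmA).lt_of_ne (ne_of_mem_erase hm.1)
  have hle : ∀ z ∈ A.erase l + A.erase l, z ≤ m + m := fun z hz => by
    obtain ⟨p, hp, q, hq, rfl⟩ := mem_add.1 hz
    exact add_le_add (hm.2 hp) (hm.2 hq)
  have hsub : {l + l, l + m, l + a} ⊆ A + A := by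
    simp only [insert_subset_iff, singleton_subset_iff]
    exact ⟨add_mem_add hl.1 hl.1, add_mem_add hl.1 hmA, add_mem_add hl.1 ha⟩
  have hdisj : Disjoint (A.erase l + A.erase l) {l + l, l + m, l + a} := by
    simp only [disjoint_insert_right, disjoint_singleton_right]
    exact ⟨fun h => (hle _ h).not_gt (by gcongr), fun h => (hle _ h).not_gt (by gcongr), hnew⟩
  have hthree : #({l + l, l + m, l + a} : Finset G) = 3 :=
    card_eq_three.2 ⟨_, _, _, by simp [hml.ne'], by simp [(ham.trans hml).ne'],
      by simp [ham.ne'], rfl⟩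
  have := card_le_card (union_subset (add_subset_add (erase_subset l A) (erase_subset l A)) hsub)
  rw [card_union_of_disjoint hdisj, hthree] at this
  lia

end OrderedGroup

/-- Going down through `A`, a sum `l + a = p + q` with `p, q < l` expresses `l - a` as the sum of
`l - p` and `l - q`, and `p, q > a`. -/
theorem sub_dvd_sub {A : Finset ℤ} {l m : ℤ} (hl : IsGreatest (A : Set ℤ) l)
    (hm : IsGreatest (A.erase l : Set ℤ) m)
    (hsum : ∀ a ∈ A, a < m → l + a ∈ A.erase l + A.erase l) : ∀ a ∈ A, l - m ∣ l - a := by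
  by_contra! hex
  obtain ⟨a, ha, hmax⟩ := exists_max_image {a ∈ A | ¬ l - m ∣ l - a} id
    (filter_nonempty_iff.2 hex)
  simp only [mem_filter, id] at ha hmax
  obtain ⟨haA, hdvd⟩ := ha
  have hal : a ≠ l := by rintro rfl; simp at hdvd
  have ham : a < m := (hm.2 (mem_erase.2 ⟨hal, haA⟩)).lt_of_ne (by rintro rfl; simp at hdvd)
  obtain ⟨p, hp, q, hq, hpq⟩ := mem_add.1 (hsum a haA ham)
  have hlt : ∀ p ∈ A.erase l, p < l := fun p hp =>
    (hl.2 (mem_of_mem_erase hp)).lt_of_ne (ne_of_mem_erase hp)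
  have hdvd' : ∀ p ∈ A.erase l, a < p → l - m ∣ l - p := fun p hp hap =>
    by_contra fun h => (hmax p ⟨mem_of_mem_erase hp, h⟩).not_gt hap
  have hp' := hdvd' p hp (by linarith [hlt q hq])
  have hq' := hdvd' q hq (by linarith [hlt p hp])
  have hadd : l - a = (l - p) + (l - q) := by linarith
  exact hdvd (hadd ▸ dvd_add hp' hq')

theorem min_le_card_of_Icc_subset {A : Finset ℤ} {l : ℤ} (h0 : Icc 0 2 ⊆ A)
    (hl : Icc (l - 2) l ⊆ A) : min 6 (l + 1) ≤ #A := by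
  have hsub := union_subset h0 hl
  rcases le_total l 5 with hl5 | hl5
  · have hIcc : Icc 0 l ⊆ Icc 0 2 ∪ Icc (l - 2) l := fun a => by
      simp only [mem_union, mem_Icc]
      lia
    have := card_le_card (hIcc.trans hsub)
    rw [Int.card_Icc] at this
    lia
  · have hdisj : Disjoint (Icc 0 2) (Icc (l - 2) l) := disjoint_left.2 fun a => by
      simp only [mem_Icc]
      lia
    have := card_le_card hsub
    rw [card_union_of_disjoint hdisj, Int.card_Icc, Int.card_Icc] at this
    lia

/-- A finite set `A` of integers is in normal form, with largest element `l`, if its least element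
is `0` and its elements have no common divisor. -/
structure IsNormalForm (A : Finset ℤ) (l : ℤ) : Prop where
  isLeast : IsLeast (A : Set ℤ) 0
  isGreatest : IsGreatest (A : Set ℤ) l
  gcd_eq_one : A.gcd id = 1

namespace IsNormalForm

variable {A : Finset ℤ} {l m : ℤ}

theorem nonneg (hA : IsNormalForm A l) {a : ℤ} (ha : a ∈ A) : 0 ≤ a := hA.isLeast.2 ha

theorem le (hA : IsNormalForm A l) {a : ℤ} (ha : a ∈ A) : a ≤ l := hA.isGreatest.2 ha

theorem isUnit_of_forall_dvd (hA : IsNormalForm A l) {d : ℤ} (hd : ∀ a ∈ A, d ∣ a) : IsUnit d :=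
  isUnit_of_dvd_one (hA.gcd_eq_one ▸ dvd_gcd hd)

theorem pos (hA : IsNormalForm A l) : 0 < l := by
  refine (hA.nonneg hA.isGreatest.1).lt_of_ne ?_
  rintro rfl
  refine not_isUnit_zero (hA.isUnit_of_forall_dvd fun a ha => ?_)
  rw [(hA.le ha).antisymm (hA.nonneg ha)]

theorem zero_mem_erase (hA : IsNormalForm A l) : 0 ∈ A.erase l :=
  mem_erase.2 ⟨hA.pos.ne, hA.isLeast.1⟩

theorem reflect (hA : IsNormalForm A l) : IsNormalForm ({l} - A) l where
  isLeast := by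
    refine ⟨mem_coe.2 (mem_sub.2 ⟨l, mem_singleton_self l, l, hA.isGreatest.1, sub_self l⟩), ?_⟩
    simp only [singleton_sub, coe_image, mem_lowerBounds, Set.forall_mem_image, sub_nonneg]
    exact fun a ha => hA.le ha
  isGreatest := by
    refine ⟨mem_coe.2 (mem_sub.2 ⟨l, mem_singleton_self l, 0, hA.isLeast.1, sub_zero l⟩), ?_⟩
    simp only [singleton_sub, coe_image, mem_upperBounds, Set.forall_mem_image, sub_le_self_iff]
    exact fun a ha => hA.nonneg ha
  gcd_eq_one := by
    have hdvd : ∀ a ∈ A, ({l} - A).gcd id ∣ l - a := fun a ha =>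
      gcd_dvd (f := id) (mem_sub.2 ⟨l, mem_singleton_self l, a, ha, rfl⟩)
    have hunit := hA.isUnit_of_forall_dvd fun a ha => by
      simpa only [sub_zero, sub_sub_cancel] using dvd_sub (hdvd 0 hA.isLeast.1) (hdvd a ha)
    rw [← Finset.normalize_gcd, normalize_eq_one.2 hunit]

theorem erase (hA : IsNormalForm A l) (hm : IsGreatest (A.erase l : Set ℤ) m)
    (hgcd : (A.erase l).gcd id = 1) : IsNormalForm (A.erase l) m where
  isLeast := ⟨hA.zero_mem_erase, fun _ ha => hA.nonneg (mem_of_mem_erase ha)⟩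
  isGreatest := hm
  gcd_eq_one := hgcd

/-- If `d` is the gcd of the smaller elements, then `d` does not divide `l`, so no sum `l + a`
is a sum of two smaller elements. -/
theorem three_mul_card_le_of_gcd_erase_ne_one (hA : IsNormalForm A l)
    (hgcd : (A.erase l).gcd id ≠ 1) : 3 * #A ≤ #(A + A) + 3 := by
  have hdvd : ∀ a ∈ A.erase l, (A.erase l).gcd id ∣ a := fun a ha => gcd_dvd (f := id) ha
  have hl : ¬ (A.erase l).gcd id ∣ l := by
    refine fun hl => hgcd ?_
    have hunit := hA.isUnit_of_forall_dvd fun a ha =>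
      (eq_or_ne a l).elim (fun h => h ▸ hl) fun h => hdvd a (mem_erase.2 ⟨h, ha⟩)
    rw [← Finset.normalize_gcd, normalize_eq_one.2 hunit]
  refine three_mul_card_le_of_add_notMem hA.isGreatest.1 fun a ha hla => ?_
  obtain ⟨p, hp, q, hq, hpq⟩ := mem_add.1 hla
  rcases eq_or_ne a l with rfl | hal
  · have := hA.le (mem_of_mem_erase hp)
    have := hA.le (mem_of_mem_erase hq)
    have := ne_of_mem_erase hp
    lia
  · refine hl ((Int.dvd_add_left (hdvd a (mem_erase.2 ⟨hal, ha⟩))).1 ?_)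
    rw [← hpq]
    exact (hdvd p hp).add (hdvd q hq)

theorem isGreatest_erase_sub_one (hA : IsNormalForm A l)
    (hlt : #(A + A) < #(A.erase l + A.erase l) + 3) :
    IsGreatest (A.erase l : Set ℤ) (l - 1) := by
  obtain ⟨m, hm⟩ : ∃ m, IsGreatest (A.erase l : Set ℤ) m :=
    ⟨_, isGreatest_max' _ ⟨0, hA.zero_mem_erase⟩⟩
  have hml : m < l := (hA.le (mem_of_mem_erase hm.1)).lt_of_ne (ne_of_mem_erase hm.1)
  have hdvd := sub_dvd_sub hA.isGreatest hm fun a ha ham =>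
    add_mem_of_card_add_self_lt hA.isGreatest hm hlt ha ham
  have hunit : IsUnit (l - m) := hA.isUnit_of_forall_dvd fun a ha => by
    simpa only [sub_zero, sub_sub_cancel] using dvd_sub (hdvd 0 hA.isLeast.1) (hdvd a ha)
  have hm1 : m = l - 1 := by
    rcases Int.isUnit_iff.1 hunit with h | h <;> lia
  exact hm1 ▸ hm

theorem sub_two_mem (hA : IsNormalForm A l) (hcard : 3 ≤ #A)
    (hlt : #(A + A) < #(A.erase l + A.erase l) + 3) : l - 2 ∈ A := by
  have hm := hA.isGreatest_erase_sub_one hlt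
  have hne : ((A.erase l).erase (l - 1)).Nonempty := card_pos.1 (by
    have := card_erase_add_one hA.isGreatest.1
    have := card_erase_add_one hm.1
    lia)
  obtain ⟨n, hn⟩ : ∃ n, IsGreatest ((A.erase l).erase (l - 1) : Set ℤ) n :=
    ⟨_, isGreatest_max' _ hne⟩
  have hnA : n ∈ A.erase l := mem_of_mem_erase hn.1
  have hn1 : n < l - 1 := (hm.2 hnA).lt_of_ne (ne_of_mem_erase hn.1)
  obtain ⟨p, hp, q, hq, hpq⟩ := mem_add.1 <|
    add_mem_of_card_add_self_lt hA.isGreatest hm hlt (mem_of_mem_erase hnA) hn1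
  have hle : ∀ p ∈ A.erase l, p = l - 1 ∨ p ≤ n := fun p hp =>
    (eq_or_ne p (l - 1)).imp_right fun hpm => hn.2 (mem_erase.2 ⟨hpm, hp⟩)
  have hn2 : n = l - 2 := by
    rcases hle p hp with rfl | hpn <;> rcases hle q hq with rfl | hqn <;> lia
  exact hn2 ▸ mem_of_mem_erase hnA

theorem three_mul_card_le_or_Icc_subset (hA : IsNormalForm A l) (hcard : 3 ≤ #A)
    (h : ∀ m, IsNormalForm (A.erase l) m →
      3 * #(A.erase l) ≤ #(A.erase l + A.erase l) + 3 ∨ 3 * #A ≤ #(A + A) + 3) :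
    3 * #A ≤ #(A + A) + 3 ∨ Icc (l - 2) l ⊆ A := by
  have herase := card_erase_add_one hA.isGreatest.1
  by_cases hgcd : (A.erase l).gcd id = 1
  swap
  · exact .inl (hA.three_mul_card_le_of_gcd_erase_ne_one hgcd)
  rcases h _ (hA.erase (isGreatest_max' _ ⟨0, hA.zero_mem_erase⟩) hgcd) with hle | hle
  swap
  · exact .inl hle
  rcases lt_or_ge #(A + A) (#(A.erase l + A.erase l) + 3) with hlt | hge
  · have hl1 := mem_of_mem_erase (hA.isGreatest_erase_sub_one hlt).1
    have hl2 := hA.sub_two_mem hcard hlt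
    refine .inr fun a ha => ?_
    obtain rfl | rfl | rfl : a = l - 2 ∨ a = l - 1 ∨ a = l := by rw [mem_Icc] at ha; lia
    exacts [hl2, hl1, hA.isGreatest.1]
  · exact .inl (by lia)

/-- If the bound fails then `A` ends in three consecutive integers, and so does its reflection, so
`A` also starts with three consecutive integers. -/
theorem three_mul_card_le_of_erase (hA : IsNormalForm A l) (h3 : 3 ≤ #A) (h5 : #A ≤ 5)
    (hl : #A ≤ l)
    (h : ∀ B m, IsNormalForm B l → #B = #A → IsNormalForm (B.erase l) m →
      3 * #(B.erase l) ≤ #(B.erase l + B.erase l) + 3 ∨ 3 * #B ≤ #(B + B) + 3) :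
    3 * #A ≤ #(A + A) + 3 := by
  have hrefl := card_singleton_sub A l
  rcases hA.three_mul_card_le_or_Icc_subset h3 fun m => h A m hA rfl with hle | htop
  · exact hle
  rcases hA.reflect.three_mul_card_le_or_Icc_subset (by lia) fun m =>
    h _ m hA.reflect hrefl with hle | hbot
  · rwa [hrefl, card_singleton_sub_add_singleton_sub] at hle
  have h0 : Icc 0 2 ⊆ A := fun a ha => by
    have hla : l - a ∈ Icc (l - 2) l := by
      rw [mem_Icc] at ha ⊢
      lia
    simpa only [singleton_sub, mem_image, sub_right_inj, exists_eq_right] using hbot hla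
  have := min_le_card_of_Icc_subset h0 htop
  lia

theorem three_mul_card_le_of_card_eq_three (hA : IsNormalForm A l) (hcard : #A = 3) (hl : 3 ≤ l) :
    3 * #A ≤ #(A + A) + 3 := by
  refine hA.three_mul_card_le_of_erase (by lia) (by lia) (by lia) fun B _ hB hBA _ => .inl ?_
  have herase := card_erase_add_one hB.isGreatest.1
  have hne : (B.erase l).Nonempty := ⟨0, hB.zero_mem_erase⟩
  have := cauchy_davenport_add_of_linearOrder_isCancelAdd hne hne
  lia

theorem three_mul_card_le_of_card_eq_four (hA : IsNormalForm A l) (hcard : #A = 4) (hl : 5 ≤ l) :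
    3 * #A ≤ #(A + A) + 3 := by
  refine hA.three_mul_card_le_of_erase (by lia) (by lia) (by lia) fun B m hB hBA hm => ?_
  have herase := card_erase_add_one hB.isGreatest.1
  rcases le_or_gt 3 m with h3 | h3
  · exact .inl (hm.three_mul_card_le_of_card_eq_three (by lia) h3)
  · exact .inr (three_mul_card_le_of_add_self_lt hB.isGreatest.1 hm.isGreatest (by lia)
      fun _ => hB.nonneg)

theorem three_mul_card_le_of_card_eq_five (hA : IsNormalForm A l) (hcard : #A = 5) (hl : 8 ≤ l) :
    3 * #A ≤ #(A + A) + 3 := by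
  refine hA.three_mul_card_le_of_erase (by lia) (by lia) (by lia) fun B m hB hBA hm => ?_
  have herase := card_erase_add_one hB.isGreatest.1
  rcases le_or_gt 5 m with h5 | h5
  · exact .inl (hm.three_mul_card_le_of_card_eq_four (by lia) h5)
  right
  rcases lt_or_ge (m + m) l with hml | hml
  · exact three_mul_card_le_of_add_self_lt hB.isGreatest.1 hm.isGreatest hml
      fun _ => hB.nonneg
  obtain ⟨rfl, rfl⟩ : m = 4 ∧ l = 8 := by lia
  have hextremal : ∀ S ∈ powersetCard 4 (Icc (0 : ℤ) 4), 4 ∈ S →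
      12 ≤ #(insert 8 S + insert 8 S) := by decide
  have hmem : B.erase 8 ∈ powersetCard 4 (Icc (0 : ℤ) 4) :=
    mem_powersetCard.2 ⟨fun a ha => mem_Icc.2 ⟨hm.nonneg ha, hm.le ha⟩, by lia⟩
  have := hextremal _ hmem hm.isGreatest.1
  rw [insert_erase hB.isGreatest.1] at this
  lia

theorem closure_image_intCast_eq_top (hA : IsNormalForm A l) (n : ℕ) :
    AddSubgroup.closure (A.image (Int.cast : ℤ → ZMod n) : Set (ZMod n)) = ⊤ := by
  obtain ⟨g, hg⟩ := Int.subgroup_cyclic (AddSubgroup.closure (A : Set ℤ))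
  rw [← AddSubgroup.zmultiples_eq_closure] at hg
  have hunit : IsUnit g := hA.isUnit_of_forall_dvd fun a ha => by
    rw [← Int.mem_zmultiples_iff, ← hg]
    exact AddSubgroup.subset_closure ha
  have htop : AddSubgroup.closure (A : Set ℤ) = ⊤ := by
    rw [hg, eq_top_iff]
    exact fun y _ => Int.mem_zmultiples_iff.2 hunit.dvd
  rw [coe_image]
  change AddSubgroup.closure (Int.castAddHom (ZMod n) '' A) = ⊤
  rw [← AddMonoidHom.map_closure, htop,
    AddSubgroup.map_top_of_surjective _ ZMod.intCast_surjective]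

section ZMod

variable {n : ℕ}

theorem zero_mem_image_intCast (hA : IsNormalForm A l) :
    0 ∈ A.image (Int.cast : ℤ → ZMod n) :=
  mem_image.2 ⟨0, hA.isLeast.1, Int.cast_zero⟩

theorem card_le_card_image_intCast_add_one (hA : IsNormalForm A n) :
    #A ≤ #(A.image (Int.cast : ℤ → ZMod n)) + 1 := by
  have hinj : Set.InjOn (Int.cast : ℤ → ZMod n) (A.erase n) := fun x hx y hy hxy => by
    have hmod := (ZMod.intCast_eq_intCast_iff x y n).1 hxy
    have hlt : ∀ z ∈ A.erase n, z < n := fun z hz =>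
      (hA.le (mem_of_mem_erase hz)).lt_of_ne (ne_of_mem_erase hz)
    rwa [Int.ModEq, Int.emod_eq_of_lt (hA.nonneg (mem_of_mem_erase hx)) (hlt x hx),
      Int.emod_eq_of_lt (hA.nonneg (mem_of_mem_erase hy)) (hlt y hy)] at hmod
  rw [← card_erase_add_one hA.isGreatest.1, ← card_image_of_injOn hinj]
  gcongr
  exact erase_subset _ _

theorem card_nsmul_add_card_nsmul_image_le (hA : IsNormalForm A n) (hn : 0 < n) (j : ℕ) :
    #(j • A) + #((j + 1) • A.image (Int.cast : ℤ → ZMod n)) ≤ #((j + 1) • A) := by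
  have himg : ((j + 1) • A).image (Int.cast : ℤ → ZMod n) = (j + 1) • A.image Int.cast :=
    image_nsmul (Int.castAddHom (ZMod n)) A (j + 1)
  rw [← himg]
  have hadd : j • A + {(n : ℤ)} ⊆ (j + 1) • A := by
    rw [succ_nsmul]
    exact add_subset_add_left (singleton_subset_iff.2 hA.isGreatest.1)
  exact card_add_card_image_le (Int.natCast_pos.2 hn) (by simp)
    (nsmul_subset_nsmul_right hA.isLeast.1 j.le_succ) hadd

theorem card_add_three_le_card_nsmul_image (hA : IsNormalForm A n) (hcard : 4 ≤ #A)
    (hn : #A + 3 ≤ n) {j : ℕ} (hj : 3 ≤ j) :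
    #A + 3 ≤ #(j • A.image (Int.cast : ℤ → ZMod n)) := by
  have : NeZero n := ⟨by lia⟩
  have h0 := hA.zero_mem_image_intCast (n := n)
  have hB := hA.card_le_card_image_intCast_add_one
  have hgrow (S : Finset (ZMod n)) (hS : S.Nonempty) :=
    min_card_add_two_le_card_add h0 (hA.closure_image_intCast_eq_top n) (by lia) hS
  simp only [ZMod.card] at hgrow
  have h2 := hgrow _ ⟨0, h0⟩
  have h3 := hgrow _ ⟨0 + 0, add_mem_add h0 h0⟩
  rw [← two_nsmul, ← succ_nsmul] at h3
  rw [← two_nsmul] at h2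
  have hmono := card_le_card (nsmul_subset_nsmul_right h0 hj)
  lia

theorem two_mul_card_add_two_le_card_add_self (hA : IsNormalForm A n) (hcard : 5 ≤ #A)
    (hn : #A + 3 ≤ n) : 2 * #A + 2 ≤ #(A + A) := by
  rcases hcard.eq_or_lt with h5 | h6
  · have := hA.three_mul_card_le_of_card_eq_five h5.symm (by lia)
    lia
  · have : NeZero n := ⟨by lia⟩
    have hB := hA.card_le_card_image_intCast_add_one
    have hstep := hA.card_nsmul_add_card_nsmul_image_le (by lia) 1
    rw [one_nsmul, one_add_one_eq_two, two_nsmul, two_nsmul] at hstep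
    have hdouble := card_le_card_add_self_of_closure_eq_top hA.zero_mem_image_intCast
      (hA.closure_image_intCast_eq_top n)
    rw [ZMod.card] at hdouble
    lia

theorem mul_card_add_three_mul_le_card_nsmul (hA : IsNormalForm A n) (hcard : 5 ≤ #A)
    (hn : #A + 3 ≤ n) {h : ℕ} (hh : 2 ≤ h) : h * #A + 3 * h ≤ #(h • A) + 4 := by
  induction h, hh using Nat.le_induction with
  | base =>
    have := hA.two_mul_card_add_two_le_card_add_self hcard hn
    rw [two_nsmul]
    lia
  | succ h hh ih =>
    have hstep := hA.card_nsmul_add_card_nsmul_image_le (by lia) h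
    have hgain := hA.card_add_three_le_card_nsmul_image (by lia) hn (Nat.succ_le_succ hh)
    rw [add_mul, mul_add]
    lia

end ZMod

end IsNormalForm

theorem hfold_eq_nsmul (h : ℕ) (A : Finset ℤ) : hfold h A = h • A := by
  induction h with
  | zero => rw [hfold, zero_nsmul, singleton_zero]
  | succ h ih => rw [hfold, ih, succ_nsmul']

theorem stmt1 (h k : ℕ) (hh : 2 ≤ h) (hk : 5 ≤ k) (A : Finset ℤ)
    (hcard : A.card = k) (h0 : (0 : ℤ) ∈ A) (hnn : ∀ a ∈ A, 0 ≤ a)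
    (hgcd : A.gcd id = 1)
    (hsum : (hfold h A).card < h * k + 3 * h - 4) :
    ∀ a ∈ A, a ≤ (k : ℤ) + 2 := by
  by_contra! hex
  obtain ⟨a, ha, hak⟩ := hex
  obtain ⟨l, hl⟩ : ∃ l, IsGreatest (A : Set ℤ) l := ⟨_, isGreatest_max' A ⟨0, h0⟩⟩
  have hal : a ≤ l := hl.2 ha
  lift l to ℕ using hnn l hl.1
  have hA : IsNormalForm A l := ⟨⟨h0, hnn⟩, hl, hgcd⟩
  have := hA.mul_card_add_three_mul_le_card_nsmul (by lia) (by lia) hh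
  rw [hfold_eq_nsmul] at hsum
  subst hcard
  lia
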